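/- arXiv:1510.07504 — 4 statements merged into one kernel-verified Lean document; each statement's English description precedes it below -/
import Mathlib

section
/- Let λ > 1 and let f : ℝ³ → ℝ³ be a measurable λ-DSS vector field, i.e. f(x) = λ·f(λx) for almost every x ∈ ℝ³. Then f belongs to L³ of the annulus A₁ = {x ∈ ℝ³ : 1 ≤ |x| < λ} if and only if f belongs to weak-L³(ℝ³), i.e. sup_{σ>0} σ³ · |{x ∈ ℝ³ : |f(x)| > σ}| < ∞ (where |·| denotes Lebesgue measure). -/
open MeasureTheory
open scoped ENNReal NNReal

/-!
The annuli `A_k = {l ^ k ≤ |x| < l ^ (k + 1)}`, `k ∈ ℤ`, partition `ℝ³ \ {0}`, and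
`x ↦ l ^ k • x` maps `A_0` onto `A_k`. Discrete self-similarity turns `|f| > σ` on `A_k` into
`|f| > σ l ^ k` on `A_0`, so that
`σ³ |{|f| > σ}| = ∫_{A_0} ∑_k (σ l ^ k)³ 1_{|f(x)| > σ l ^ k} dx` (`weak_eq_lintegral`).
The integrand is a geometric series whose largest term has `σ l ^ k` within a factor `l` of
`|f(x)|`; hence it is comparable to `|f(x)|³`, with constants depending only on `l`
(`cube_le_levelSum`, `levelSum_le_cube`). This gives both implications.
-/

/-- Euclidean space `ℝ³`. -/
abbrev E3 := EuclideanSpace ℝ (Fin 3)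

/-- The geometric-scale sum `∑_k (s l ^ k)³ 1_{s l ^ k < t}` over `k ∈ ℤ`, with values in `[0, ∞]`. -/
noncomputable def levelSum (l s t : ℝ) : ℝ≥0∞ :=
  ∑' k : ℤ, if s * l ^ k < t then ENNReal.ofReal ((s * l ^ k) ^ 3) else 0

lemma cube_le_levelSum {l t : ℝ} (hl : 1 < l) (ht : 0 ≤ t) :
    ENNReal.ofReal t ^ 3 ≤ ENNReal.ofReal (l ^ 3) * levelSum l 1 t := by
  have hl0 : 0 < l := by linarith
  rcases ht.eq_or_lt with rfl | ht
  · simp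
  obtain ⟨k, hk1, hk2⟩ := exists_mem_Ioc_zpow ht hl
  calc ENNReal.ofReal t ^ 3 = ENNReal.ofReal (t ^ 3) := (ENNReal.ofReal_pow ht.le 3).symm
    _ ≤ ENNReal.ofReal (l ^ 3 * (1 * l ^ k) ^ 3) := by
        apply ENNReal.ofReal_le_ofReal
        rw [← mul_pow]
        rw [zpow_add_one₀ hl0.ne'] at hk2
        gcongr
        linarith
    _ = ENNReal.ofReal (l ^ 3) * ENNReal.ofReal ((1 * l ^ k) ^ 3) :=
        ENNReal.ofReal_mul (by positivity)
    _ ≤ _ := by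
        unfold levelSum
        gcongr
        refine le_trans ?_ (ENNReal.le_tsum k)
        rw [if_pos (by simpa using hk1)]

lemma levelSum_le_cube {l s t : ℝ} (hl : 1 < l) (hs : 0 < s) (ht : 0 ≤ t) :
    levelSum l s t ≤ (1 - ENNReal.ofReal (l⁻¹ ^ 3))⁻¹ * ENNReal.ofReal t ^ 3 := by
  have hl0 : 0 < l := by linarith
  rcases ht.eq_or_lt with rfl | ht
  · have h : ∀ k : ℤ, ¬ s * l ^ k < 0 := fun k => not_lt.2 (by positivity)
    simp [levelSum, h]
  obtain ⟨K, hK1, hK2⟩ := exists_mem_Ioc_zpow (div_pos ht hs) hl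
  rw [lt_div_iff₀ hs] at hK1
  rw [div_le_iff₀ hs] at hK2
  have hinj : Function.Injective (fun n : ℕ => K - (n : ℤ)) := fun a b h => by
    simp only at h; omega
  -- only the indices `k ≤ K` contribute
  have hsupp : Function.support
      (fun k : ℤ => if s * l ^ k < t then ENNReal.ofReal ((s * l ^ k) ^ 3) else 0) ⊆
      Set.range (fun n : ℕ => K - (n : ℤ)) := by
    intro k hk
    have hk' : s * l ^ k < t := by
      by_contra h
      simp [h] at hk
    have : l ^ k < l ^ (K + 1) := by
      refine lt_of_mul_lt_mul_left ?_ hs.le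
      linarith
    have := (zpow_lt_zpow_iff_right₀ hl).1 this
    exact ⟨(K - k).toNat, by simp only; omega⟩
  unfold levelSum
  rw [← hinj.tsum_eq hsupp, ← ENNReal.tsum_geometric, ← ENNReal.tsum_mul_right]
  refine ENNReal.tsum_le_tsum fun n => ?_
  split_ifs
  · rw [← ENNReal.ofReal_pow ht.le, ← ENNReal.ofReal_pow (by positivity),
      ← ENNReal.ofReal_mul (by positivity)]
    apply ENNReal.ofReal_le_ofReal
    have : s * l ^ (K - (n : ℤ)) = l⁻¹ ^ n * (l ^ K * s) := by
      rw [zpow_sub₀ hl0.ne', zpow_natCast, inv_pow]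
      field_simp
    rw [this, mul_pow, pow_right_comm]
    gcongr
  · exact zero_le

lemma quasiMeasurePreserving_smul_E3 {r : ℝ} (hr : r ≠ 0) :
    Measure.QuasiMeasurePreserving (fun x : E3 => r • x) volume volume :=
  ⟨measurable_const_smul r, by
    rw [Measure.map_addHaar_smul volume hr]
    exact Measure.smul_absolutelyContinuous⟩

lemma dss_zpow {l : ℝ} (hl : 1 < l) {f : E3 → E3}
    (hDSS : ∀ᵐ x : E3 ∂volume, f x = l • f (l • x)) (k : ℤ) :
    ∀ᵐ x : E3 ∂volume, f x = l ^ k • f (l ^ k • x) := by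
  have hl0 : l ≠ 0 := by linarith
  have H : ∀ k : ℤ, ∀ᵐ x : E3 ∂volume, f (l ^ k • x) = l • f (l ^ (k + 1) • x) := by
    intro k
    filter_upwards [(quasiMeasurePreserving_smul_E3 (zpow_ne_zero k hl0)).ae hDSS] with x hx
    rwa [smul_smul, ← zpow_one_add₀ hl0, add_comm 1 k] at hx
  induction k using Int.induction_on with
  | zero => simp
  | succ n ih =>
    filter_upwards [ih, H n] with x h1 h2
    rw [h2, smul_smul, ← zpow_add_one₀ hl0] at h1
    exact h1
  | pred n ih =>
    filter_upwards [ih, H (-(n : ℤ) - 1)] with x h1 h2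
    rw [h2, smul_smul, ← zpow_add_one₀ hl0, sub_add_cancel]
    exact h1

/-- The annulus `{l ^ k ≤ |x| < l ^ (k + 1)}`. -/
def annulus (l : ℝ) (k : ℤ) : Set E3 := {x | l ^ k ≤ ‖x‖ ∧ ‖x‖ < l ^ (k + 1)}

lemma measurableSet_annulus (l : ℝ) (k : ℤ) : MeasurableSet (annulus l k) :=
  (measurableSet_le measurable_const measurable_norm).inter
    (measurableSet_lt measurable_norm measurable_const)

lemma pairwise_disjoint_annulus {l : ℝ} (hl : 1 < l) :
    Pairwise (Function.onFun Disjoint (annulus l)) := by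
  intro i j hij
  refine Set.disjoint_left.2 fun x hi hj => hij ?_
  have h1 := (zpow_lt_zpow_iff_right₀ hl).1 (hi.1.trans_lt hj.2)
  have h2 := (zpow_lt_zpow_iff_right₀ hl).1 (hj.1.trans_lt hi.2)
  omega

lemma iUnion_annulus_ae {l : ℝ} (hl : 1 < l) :
    ∀ᵐ x : E3 ∂volume, x ∈ ⋃ k, annulus l k := by
  filter_upwards [Measure.ae_ne volume (0 : E3)] with x hx
  obtain ⟨k, hk⟩ := exists_mem_Ico_zpow (norm_pos_iff.2 hx) hl
  exact Set.mem_iUnion.2 ⟨k, hk⟩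

/-- On `A_k`, the change of variables `x = l ^ k • y` and self-similarity transfer the
superlevel set of height `s` to the one of height `s l ^ k` on `A_0`. -/
lemma volume_superlevel_annulus {l : ℝ} (hl : 1 < l) {f : E3 → E3}
    (hDSS : ∀ᵐ x : E3 ∂volume, f x = l • f (l • x)) (s : ℝ) (k : ℤ) :
    volume ({x : E3 | s < ‖f x‖} ∩ annulus l k) =
      ENNReal.ofReal ((l ^ k) ^ 3) * volume ({x : E3 | s * l ^ k < ‖f x‖} ∩ annulus l 0) := by
  have hl0 : 0 < l := by linarith
  have hr : 0 < l ^ k := zpow_pos hl0 k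
  have h1 := Measure.addHaar_preimage_smul (volume : Measure E3) hr.ne'
    ({x : E3 | s < ‖f x‖} ∩ annulus l k)
  have h2 : ((fun x : E3 => l ^ k • x) ⁻¹' ({x : E3 | s < ‖f x‖} ∩ annulus l k) : Set E3)
      =ᵐ[volume] ({x : E3 | s * l ^ k < ‖f x‖} ∩ annulus l 0 : Set E3) := by
    filter_upwards [dss_zpow hl hDSS k] with x hx
    apply propext
    change (s < ‖f (l ^ k • x)‖ ∧ l ^ k ≤ ‖l ^ k • x‖ ∧ ‖l ^ k • x‖ < l ^ (k + 1)) ↔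
      (s * l ^ k < ‖f x‖ ∧ l ^ (0 : ℤ) ≤ ‖x‖ ∧ ‖x‖ < l ^ ((0 : ℤ) + 1))
    have e1 : ‖f x‖ = ‖f (l ^ k • x)‖ * l ^ k := by
      conv_lhs => rw [hx]
      rw [norm_smul, Real.norm_of_nonneg hr.le, mul_comm]
    rw [e1, norm_smul, Real.norm_of_nonneg hr.le, zpow_add_one₀ hl0.ne', mul_lt_mul_iff_left₀ hr,
      mul_lt_mul_iff_right₀ hr, le_mul_iff_one_le_right hr]
    simp
  rw [measure_congr h2, finrank_euclideanSpace_fin, abs_of_pos (by positivity)] at h1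
  rw [h1, ← mul_assoc, ← ENNReal.ofReal_mul (by positivity), mul_inv_cancel₀ (by positivity)]
  simp

lemma weak_eq_lintegral {l : ℝ} (hl : 1 < l) {f : E3 → E3} (hf : Measurable f)
    (hDSS : ∀ᵐ x : E3 ∂volume, f x = l • f (l • x)) {s : ℝ} (hs : 0 < s) :
    ENNReal.ofReal (s ^ 3) * volume {x : E3 | s < ‖f x‖} =
      ∫⁻ x in annulus l 0, levelSum l s ‖f x‖ := by
  have hl0 : 0 < l := by linarith
  have hm : ∀ a : ℝ, MeasurableSet {x : E3 | a < ‖f x‖} := fun a =>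
    measurableSet_lt measurable_const hf.norm
  have hdec : volume {x : E3 | s < ‖f x‖} =
      ∑' k : ℤ, volume ({x : E3 | s < ‖f x‖} ∩ annulus l k) := by
    rw [← measure_iUnion (fun i j hij => ((pairwise_disjoint_annulus hl) hij).mono
      Set.inter_subset_right Set.inter_subset_right)
      fun k => (hm s).inter (measurableSet_annulus l k), ← Set.inter_iUnion]
    exact (measure_inter_conull (iUnion_annulus_ae hl)).symm
  rw [hdec, ← ENNReal.tsum_mul_left]
  unfold levelSum
  rw [lintegral_tsum fun k => (Measurable.ite (hm _) measurable_const
    measurable_const).aemeasurable]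
  refine tsum_congr fun k => ?_
  have hind : (fun x : E3 => if s * l ^ k < ‖f x‖ then ENNReal.ofReal ((s * l ^ k) ^ 3) else 0) =
      {x : E3 | s * l ^ k < ‖f x‖}.indicator fun _ => ENNReal.ofReal ((s * l ^ k) ^ 3) := by
    ext x
    simp [Set.indicator_apply]
  rw [volume_superlevel_annulus hl hDSS, hind, lintegral_indicator_const (hm _),
    Measure.restrict_apply (hm _), ← mul_assoc, ← ENNReal.ofReal_mul (by positivity), mul_pow]

/-- For a measurable `λ`-DSS vector field `f : ℝ³ → ℝ³` (`λ > 1`),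
`f ∈ L³(A₁)` with `A₁ = {1 ≤ |x| < λ}` iff `f` has finite weak-`L³` quasinorm. -/
theorem stmt0 (l : ℝ) (hl : 1 < l)
    (f : EuclideanSpace ℝ (Fin 3) → EuclideanSpace ℝ (Fin 3))
    (hf : Measurable f)
    (hDSS : ∀ᵐ (x : EuclideanSpace ℝ (Fin 3)) ∂volume, f x = l • f (l • x)) :
    (∫⁻ x in {x : EuclideanSpace ℝ (Fin 3) | 1 ≤ ‖x‖ ∧ ‖x‖ < l},
        (‖f x‖₊ : ℝ≥0∞) ^ 3 ∂volume) < ⊤ ↔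
    (⨆ (σ : ℝ) (_ : 0 < σ), ENNReal.ofReal (σ ^ 3) *
        volume {x : EuclideanSpace ℝ (Fin 3) | σ < ‖f x‖}) < ⊤ := by
  have hl0 : 0 < l := by linarith
  have hA : {x : EuclideanSpace ℝ (Fin 3) | 1 ≤ ‖x‖ ∧ ‖x‖ < l} = annulus l 0 := by
    simp [annulus]
  have hn : ∀ x, (‖f x‖₊ : ℝ≥0∞) = ENNReal.ofReal ‖f x‖ := fun x =>
    (ofReal_norm (f x)).symm
  simp_rw [hA, hn]
  constructor
  · intro h
    have hC : (1 - ENNReal.ofReal (l⁻¹ ^ 3))⁻¹ < ⊤ := by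
      rw [ENNReal.inv_lt_top, tsub_pos_iff_lt, ENNReal.ofReal_lt_one]
      exact pow_lt_one₀ (by positivity) (inv_lt_one_of_one_lt₀ hl) (by norm_num)
    refine lt_of_le_of_lt (iSup₂_le fun s hs => ?_) (ENNReal.mul_lt_top hC h)
    rw [weak_eq_lintegral hl hf hDSS hs, ← lintegral_const_mul' _ _ hC.ne]
    exact lintegral_mono fun x => levelSum_le_cube hl hs (norm_nonneg _)
  · intro h
    -- the single level `σ = 1` already controls the integral
    have h1 := (le_iSup₂ (f := fun (σ : ℝ) (_ : 0 < σ) => ENNReal.ofReal (σ ^ 3) *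
        volume {x : EuclideanSpace ℝ (Fin 3) | σ < ‖f x‖}) 1 one_pos).trans_lt h
    rw [weak_eq_lintegral hl hf hDSS one_pos] at h1
    refine lt_of_le_of_lt ?_ (ENNReal.mul_lt_top (ENNReal.ofReal_lt_top (r := l ^ 3)) h1)
    rw [← lintegral_const_mul' _ _ ENNReal.ofReal_ne_top]
    exact lintegral_mono fun x => cube_le_levelSum hl (norm_nonneg _)
end

section
/- Let λ > 1 and let f : ℝ³ → ℝ³ be a measurable λ-DSS vector field. Then ∫_{A₁} |f(x)|³ dx ≤ 3(λ−1)λ² · sup_{β>0} β³ · |{x ∈ ℝ³ : |f(x)| > β}|, where A₁ = {x ∈ ℝ³ : 1 ≤ |x| < λ}. -/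
/-!
Decompose `ℝ³ \ {0}` into the annuli `A_k = {l ^ k ≤ ‖x‖ < l ^ (k + 1)} = l ^ k • A_0`. Discrete
self-similarity gives `f (l ^ k • x) = l ^ (-k) • f x` a.e., so the change of variables
`x ↦ l ^ k • x` yields `|A_k ∩ {‖f‖ > 1}| = l ^ (3 * k) * |A_0 ∩ {‖f‖ > l ^ k}|`
(`volume_annulus_slice`). Summing over `k`,
`∑ k, l ^ (3 * k) * |A_0 ∩ {‖f‖ > l ^ k}| ≤ |{‖f‖ > 1}|`.
On the other hand, summing a geometric series,
`s ^ 3 ≤ (l ^ 3 - 1) * ∑ k, l ^ (3 * k) * 1_{l ^ k < s}` for all `s ≥ 0` (`cube_le_dyadic_sum`).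
Integrating over `A_0` with `s = ‖f x‖` bounds the left-hand side by
`(l ^ 3 - 1) * |{‖f‖ > 1}|`, so the single level `β = 1` of the supremum suffices, since
`l ^ 3 - 1 = (l - 1) * (l ^ 2 + l + 1) ≤ 3 * (l - 1) * l ^ 2`.
-/

open MeasureTheory
open scoped ENNReal NNReal

/-- A layer-cake bound along the levels `l ^ k`: if `l ^ j < s ≤ l ^ (j + 1)`, the terms `k ≤ j`
form a geometric series with sum `l ^ (3 * (j + 1)) / (l ^ 3 - 1)`. -/
lemma cube_le_dyadic_sum (l : ℝ) (hl : 1 < l) (s : ℝ) (hs : 0 ≤ s) :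
    ENNReal.ofReal s ^ 3 ≤ ENNReal.ofReal (l ^ 3 - 1) *
      ∑' k : ℤ, (if l ^ k < s then ENNReal.ofReal ((l ^ k) ^ 3) else 0) := by
  have hl0 : 0 < l := by linarith
  have hl3 : 1 < l ^ 3 := one_lt_pow₀ hl (by norm_num)
  rcases hs.eq_or_lt with rfl | hs
  · simp
  obtain ⟨j, hj1, hj2⟩ := exists_mem_Ioc_zpow hs hl
  have hterm (n : ℕ) : (l ^ (j - n : ℤ)) ^ 3 = (l ^ j) ^ 3 * ((l ^ 3)⁻¹) ^ n := by
    rw [zpow_sub₀ hl0.ne', zpow_natCast, div_pow, div_eq_mul_inv, inv_pow, ← pow_mul, ← pow_mul,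
      mul_comm n 3]
  have hgeo : HasSum (fun n : ℕ => (l ^ (j - n : ℤ)) ^ 3)
      ((l ^ j) ^ 3 * (1 - (l ^ 3)⁻¹)⁻¹) := by
    simp_rw [hterm]
    exact (hasSum_geometric_of_lt_one (by positivity) (inv_lt_one_of_one_lt₀ hl3)).mul_left _
  have hinj : Function.Injective (fun n : ℕ => (j - n : ℤ)) := by
    intro a b h
    simp only at h
    omega
  calc ENNReal.ofReal s ^ 3 = ENNReal.ofReal (s ^ 3) := (ENNReal.ofReal_pow hs.le 3).symm
    _ ≤ ENNReal.ofReal ((l ^ 3 - 1) * ((l ^ j) ^ 3 * (1 - (l ^ 3)⁻¹)⁻¹)) := by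
        apply ENNReal.ofReal_le_ofReal
        have h1 : (l ^ 3 - 1) * ((l ^ j) ^ 3 * (1 - (l ^ 3)⁻¹)⁻¹) = (l ^ (j + 1)) ^ 3 := by
          have h2 : (1 - (l ^ 3)⁻¹) = (l ^ 3 - 1) / l ^ 3 := by field_simp
          have h3 : l ^ 3 - 1 ≠ 0 := by linarith
          rw [h2, zpow_add_one₀ hl0.ne']
          field_simp
        rw [h1]
        gcongr
    _ = ENNReal.ofReal (l ^ 3 - 1) * ∑' n : ℕ, ENNReal.ofReal ((l ^ (j - n : ℤ)) ^ 3) := by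
        rw [ENNReal.ofReal_mul (by linarith), ← hgeo.tsum_eq,
          ENNReal.ofReal_tsum_of_nonneg (fun n => by positivity) hgeo.summable]
    _ = ENNReal.ofReal (l ^ 3 - 1) * ∑' n : ℕ, (fun k : ℤ =>
          if l ^ k < s then ENNReal.ofReal ((l ^ k) ^ 3) else 0) (j - n : ℤ) := by
        congr 2
        ext n
        have : l ^ (j - n : ℤ) < s :=
          (zpow_le_zpow_right₀ hl.le (by omega)).trans_lt hj1
        simp [this]
    _ ≤ _ := by
        gcongr
        exact ENNReal.tsum_comp_le_tsum_of_injective hinj _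

/-- Self-similarity at all scales: the relation at scale `l ^ k` is pulled back along the dilation
by `l ^ k`, which preserves null sets, and the countably many relations are chained pointwise. -/
lemma ae_dss_zpow (l : ℝ) (hl : 1 < l)
    (f : EuclideanSpace ℝ (Fin 3) → EuclideanSpace ℝ (Fin 3))
    (hDSS : ∀ᵐ (x : EuclideanSpace ℝ (Fin 3)) ∂volume, f x = l • f (l • x)) :
    ∀ᵐ (x : EuclideanSpace ℝ (Fin 3)) ∂volume, ∀ k : ℤ, f x = l ^ k • f (l ^ k • x) := by
  have hl0 : l ≠ 0 := by linarith
  have h1 : ∀ᵐ (x : EuclideanSpace ℝ (Fin 3)) ∂volume, ∀ k : ℤ,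
      f (l ^ k • x) = l • f (l • l ^ k • x) := by
    rw [ae_all_iff]
    intro k
    rw [ae_iff] at hDSS ⊢
    have := Measure.addHaar_preimage_smul (volume : Measure (EuclideanSpace ℝ (Fin 3)))
      (zpow_ne_zero k hl0) {x | ¬ f x = l • f (l • x)}
    rw [hDSS, mul_zero] at this
    exact this
  filter_upwards [h1] with x hx k
  induction k with
  | zero => simp
  | succ n ih =>
    rw [ih, hx n, smul_smul, smul_smul, ← zpow_add_one₀ hl0, ← zpow_one_add₀ hl0, add_comm 1]
  | pred n ih =>
    have h := hx (-n - 1)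
    rw [smul_smul, ← zpow_one_add₀ hl0, add_sub_cancel] at h
    rw [h, smul_smul, ← zpow_add_one₀ hl0, sub_add_cancel]
    exact ih

/-- Change of variables `x ↦ l ^ k • x` from the unit annulus to the `k`-th one. -/
lemma volume_annulus_slice (l : ℝ) (hl : 1 < l)
    (f : EuclideanSpace ℝ (Fin 3) → EuclideanSpace ℝ (Fin 3))
    (hDSS : ∀ᵐ (x : EuclideanSpace ℝ (Fin 3)) ∂volume, f x = l • f (l • x)) (k : ℤ) :
    ENNReal.ofReal ((l ^ k) ^ 3) *
        volume ({x : EuclideanSpace ℝ (Fin 3) | l ^ k < ‖f x‖} ∩ {x | 1 ≤ ‖x‖ ∧ ‖x‖ < l}) =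
      volume ({x : EuclideanSpace ℝ (Fin 3) | 1 < ‖f x‖} ∩
        {x | l ^ k ≤ ‖x‖ ∧ ‖x‖ < l ^ (k + 1)}) := by
  have hl0 : 0 < l := by linarith
  have hk : 0 < l ^ k := zpow_pos hl0 k
  have h := Measure.addHaar_preimage_smul (volume : Measure (EuclideanSpace ℝ (Fin 3)))
    hk.ne' ({x : EuclideanSpace ℝ (Fin 3) | 1 < ‖f x‖} ∩
        {x | l ^ k ≤ ‖x‖ ∧ ‖x‖ < l ^ (k + 1)})
  have hae : volume ({x : EuclideanSpace ℝ (Fin 3) | l ^ k < ‖f x‖} ∩ {x | 1 ≤ ‖x‖ ∧ ‖x‖ < l}) =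
      volume ((l ^ k • ·) ⁻¹' ({x : EuclideanSpace ℝ (Fin 3) | 1 < ‖f x‖} ∩
        {x | l ^ k ≤ ‖x‖ ∧ ‖x‖ < l ^ (k + 1)})) := by
    apply measure_congr
    filter_upwards [ae_dss_zpow l hl f hDSS] with x hx
    apply propext
    change (l ^ k < ‖f x‖ ∧ 1 ≤ ‖x‖ ∧ ‖x‖ < l) ↔
      (1 < ‖f (l ^ k • x)‖ ∧ l ^ k ≤ ‖l ^ k • x‖ ∧ ‖l ^ k • x‖ < l ^ (k + 1))
    rw [hx k, norm_smul, norm_smul, Real.norm_of_nonneg hk.le, zpow_add_one₀ hl0.ne',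
      lt_mul_iff_one_lt_right hk, le_mul_iff_one_le_right hk, mul_lt_mul_iff_right₀ hk]
  rw [hae, h, finrank_euclideanSpace_fin, abs_of_pos (by positivity), ← mul_assoc,
    ← ENNReal.ofReal_mul (by positivity), mul_inv_cancel₀ (by positivity), ENNReal.ofReal_one,
    one_mul]

/-- For a measurable `λ`-DSS vector field `f : ℝ³ → ℝ³` (`λ > 1`),
`∫_{A₁} |f|³ ≤ 3(λ−1)λ² · sup_{β>0} β³·|{|f| > β}|`. -/
theorem stmt2 (l : ℝ) (hl : 1 < l)
    (f : EuclideanSpace ℝ (Fin 3) → EuclideanSpace ℝ (Fin 3))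
    (hf : Measurable f)
    (hDSS : ∀ᵐ (x : EuclideanSpace ℝ (Fin 3)) ∂volume, f x = l • f (l • x)) :
    (∫⁻ x in {x : EuclideanSpace ℝ (Fin 3) | 1 ≤ ‖x‖ ∧ ‖x‖ < l},
        (‖f x‖₊ : ℝ≥0∞) ^ 3 ∂volume) ≤
      ENNReal.ofReal (3 * (l - 1) * l ^ 2) *
        ⨆ (β : ℝ) (_ : 0 < β), ENNReal.ofReal (β ^ 3) *
          volume {x : EuclideanSpace ℝ (Fin 3) | β < ‖f x‖} := by
  have hmeas (c : ℝ) : MeasurableSet {x : EuclideanSpace ℝ (Fin 3) | c < ‖f x‖} :=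
    measurableSet_lt measurable_const hf.norm
  have hmeasA (a b : ℝ) : MeasurableSet {x : EuclideanSpace ℝ (Fin 3) | a ≤ ‖x‖ ∧ ‖x‖ < b} :=
    (measurableSet_le measurable_const measurable_norm).inter
      (measurableSet_lt measurable_norm measurable_const)
  have hdisj : Pairwise (Function.onFun Disjoint fun k : ℤ =>
      {x : EuclideanSpace ℝ (Fin 3) | 1 < ‖f x‖} ∩ {x | l ^ k ≤ ‖x‖ ∧ ‖x‖ < l ^ (k + 1)}) := by
    intro i j hij
    refine Set.disjoint_left.2 fun x hx hy => hij ?_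
    have h1 := (zpow_lt_zpow_iff_right₀ hl).1 (hx.2.1.trans_lt hy.2.2)
    have h2 := (zpow_lt_zpow_iff_right₀ hl).1 (hy.2.1.trans_lt hx.2.2)
    omega
  calc _ ≤ ∫⁻ x in {x : EuclideanSpace ℝ (Fin 3) | 1 ≤ ‖x‖ ∧ ‖x‖ < l},
        ENNReal.ofReal (l ^ 3 - 1) * ∑' k : ℤ, {x | l ^ k < ‖f x‖}.indicator
          (fun _ => ENNReal.ofReal ((l ^ k) ^ 3)) x := by
        refine lintegral_mono fun x => ?_
        have h := cube_le_dyadic_sum l hl ‖f x‖ (norm_nonneg _)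
        rw [ofReal_norm] at h
        simp only [Set.indicator_apply, Set.mem_ofPred_eq]
        exact h
    _ = ENNReal.ofReal (l ^ 3 - 1) * ∑' k : ℤ, ENNReal.ofReal ((l ^ k) ^ 3) *
        volume ({x : EuclideanSpace ℝ (Fin 3) | l ^ k < ‖f x‖} ∩ {x | 1 ≤ ‖x‖ ∧ ‖x‖ < l}) := by
        rw [lintegral_const_mul' _ _ ENNReal.ofReal_ne_top, lintegral_tsum fun k =>
          (measurable_const.indicator (hmeas (l ^ k))).aemeasurable]
        congr 2
        ext k
        rw [lintegral_indicator_const (hmeas _), Measure.restrict_apply (hmeas _)]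
    _ ≤ ENNReal.ofReal (l ^ 3 - 1) * volume {x : EuclideanSpace ℝ (Fin 3) | 1 < ‖f x‖} := by
        simp_rw [volume_annulus_slice l hl f hDSS]
        gcongr
        refine (tsum_meas_le_meas_iUnion_of_disjoint _
          (fun k => (hmeas 1).inter (hmeasA _ _)) hdisj).trans (measure_mono ?_)
        exact Set.iUnion_subset fun k => Set.inter_subset_left
    _ ≤ _ := by
        refine mul_le_mul' (ENNReal.ofReal_le_ofReal ?_) ?_
        · nlinarith [mul_nonneg (sub_nonneg.2 hl.le) (sub_nonneg.2 hl.le),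
            mul_nonneg (mul_nonneg (sub_nonneg.2 hl.le) (sub_nonneg.2 hl.le))
              (by linarith : (0 : ℝ) ≤ 2 * l + 1)]
        · refine le_trans ?_ (le_iSup₂ (1 : ℝ) one_pos)
          simp
end

section
/- Let λ > 1, let q ∈ (3, ∞), and let v₀ : ℝ³ → ℝ³ be a measurable λ-DSS vector field with finite weak-L³ quasinorm, i.e. sup_{σ>0} σ³·|{x : |v₀(x)| > σ}| < ∞. Define the heat extension V₀(x,t) = ∫_{ℝ³} (4πt)^{−3/2} e^{−|x−z|²/(4t)} v₀(z) dz. Then for every ε > 0 there exists R₀ ≥ 1 such that for all R ≥ R₀ and all t ∈ [1, λ²], one has (∫_{|x|>R} |V₀(x,t)|^q dx)^{1/q} ≤ ε. -/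
/-!
The heat kernels `G_t` with `1 ≤ t ≤ l²` are all dominated by the single Gaussian
`K(y) = exp (-‖y‖² / (4 l²))`, so `‖V(x,t)‖ ≤ U(x) := (K * ‖v₀‖)(x)` uniformly in `t`. It therefore
suffices that `U ∈ L^q(ℝ³)`: the tails `∫_{‖x‖>R} U^q` of a finite integral tend to zero.

To see that `U ∈ L^q`, split `v₀` at height one. By the layer-cake formula and the weak-`L³` bound,
the part where `‖v₀‖ > 1` lies in `L¹` (`lintegral_large_lt_top`) and the part where `‖v₀‖ ≤ 1` lies
in `L^q`, because `q > 3` (`lintegral_small_lt_top`). Since `K ∈ L¹ ∩ L^q`, Young's inequality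
`‖F * w‖_q ≤ ‖F‖_q ‖w‖_1` (`young_lintegral`) applies to both parts, with the Gaussian in the
role of `F` for the large part and in the role of `w` for the small part.
-/

open MeasureTheory
open scoped ENNReal NNReal

/-! ### Young's inequality for nonnegative functions -/

/-- Jensen's inequality for the measure `w dμ`, not normalised. -/
lemma jensen_lintegral {α : Type*} [MeasurableSpace α] (μ : Measure α) {q : ℝ} (hq : 1 ≤ q)
    {F w : α → ℝ≥0∞} (hF : Measurable F) (hw : Measurable w) :
    (∫⁻ z, F z * w z ∂μ) ^ q ≤ (∫⁻ z, F z ^ q * w z ∂μ) * (∫⁻ z, w z ∂μ) ^ (q - 1) := by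
  have hq0 : 0 < q := by linarith
  have h1 : (0 : ℝ) ≤ 1 / q := by positivity
  have h2 : (0 : ℝ) ≤ 1 - 1 / q := by
    rw [sub_nonneg, div_le_one hq0]; exact hq
  have key := ENNReal.lintegral_mul_norm_pow_le (μ := μ) (f := fun z => F z ^ q * w z) (g := w)
    (by fun_prop) (by fun_prop) h1 h2 (by ring)
  have e : ∀ z, (F z ^ q * w z) ^ (1 / q) * w z ^ (1 - 1 / q) = F z * w z := by
    intro z
    rw [ENNReal.mul_rpow_of_nonneg _ _ h1, ← ENNReal.rpow_mul, mul_one_div_cancel hq0.ne',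
      ENNReal.rpow_one, mul_assoc, ← ENNReal.rpow_add_of_nonneg _ _ h1 h2]
    simp
  simp_rw [e] at key
  refine (ENNReal.rpow_le_rpow key hq0.le).trans_eq ?_
  rw [ENNReal.mul_rpow_of_nonneg _ _ hq0.le, ← ENNReal.rpow_mul, ← ENNReal.rpow_mul]
  congr 2
  · rw [one_div_mul_cancel hq0.ne', ENNReal.rpow_one]
  · field_simp

/-- Young's inequality `‖F * w‖_q ≤ ‖F‖_q ‖w‖_1`, raised to the power `q`. -/
lemma young_lintegral {E : Type*} [NormedAddCommGroup E] [MeasurableSpace E] [BorelSpace E]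
    [SecondCountableTopology E] (μ : Measure E) [SFinite μ] [μ.IsAddLeftInvariant]
    {q : ℝ} (hq : 1 ≤ q) {F w : E → ℝ≥0∞} (hF : Measurable F) (hw : Measurable w) :
    ∫⁻ x, (∫⁻ z, F (x - z) * w z ∂μ) ^ q ∂μ ≤
      (∫⁻ x, F x ^ q ∂μ) * (∫⁻ z, w z ∂μ) ^ q := by
  calc ∫⁻ x, (∫⁻ z, F (x - z) * w z ∂μ) ^ q ∂μ
      ≤ ∫⁻ x, (∫⁻ z, F (x - z) ^ q * w z ∂μ) * (∫⁻ z, w z ∂μ) ^ (q - 1) ∂μ :=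
        lintegral_mono fun x => jensen_lintegral μ hq (F := fun z => F (x - z)) (by fun_prop) hw
    _ = (∫⁻ x, ∫⁻ z, F (x - z) ^ q * w z ∂μ ∂μ) * (∫⁻ z, w z ∂μ) ^ (q - 1) := by
        rw [lintegral_mul_const]
        exact Measurable.lintegral_prod_right' (f := fun p : E × E => F (p.1 - p.2) ^ q * w p.2)
          (by fun_prop)
    _ = ((∫⁻ x, F x ^ q ∂μ) * ∫⁻ z, w z ∂μ) * (∫⁻ z, w z ∂μ) ^ (q - 1) := by
        congr 1
        rw [lintegral_lintegral_swap (by fun_prop), ← lintegral_const_mul _ hw]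
        refine lintegral_congr fun z => ?_
        rw [lintegral_mul_const _ (by fun_prop)]
        congr 1
        exact lintegral_sub_right_eq_self (fun x => F x ^ q) z
    _ = _ := by
        rw [mul_assoc]
        congr 1
        nth_rewrite 1 [← ENNReal.rpow_one (∫⁻ z, w z ∂μ)]
        rw [← ENNReal.rpow_add_of_nonneg _ _ zero_le_one (by linarith)]
        simp

/-! ### Splitting a weak-`L³` function at height one -/

section WeakL3

variable {α : Type*} [MeasurableSpace α] {μ : Measure α} {g : α → ℝ} {M : ℝ≥0∞}

/-- Where a weak-`L³` function exceeds one, it is integrable. -/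
lemma lintegral_large_lt_top (hg : Measurable g) (hM : M ≠ ⊤)
    (hw : ∀ σ : ℝ, 0 < σ → μ {x | σ < g x} ≤ M * ENNReal.ofReal (σ ^ (-3 : ℝ))) :
    ∫⁻ x, ENNReal.ofReal ({x | 1 < g x}.indicator g x) ∂μ < ⊤ := by
  have hms : MeasurableSet {x | 1 < g x} := measurableSet_lt measurable_const hg
  have hnn : 0 ≤ {x | 1 < g x}.indicator g :=
    Set.indicator_nonneg fun x (hx : 1 < g x) => by linarith
  rw [lintegral_eq_lintegral_meas_lt μ (Filter.Eventually.of_forall hnn)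
    (hg.indicator hms).aemeasurable]
  have hsub : ∀ t s : ℝ, 0 < t → (s = t ∨ s = 1) →
      {a | t < {x | 1 < g x}.indicator g a} ⊆ {x | s < g x} := by
    intro t s ht hs a ha
    simp only [Set.mem_ofPred_eq, Set.indicator_apply] at ha ⊢
    split_ifs at ha with h
    · rcases hs with rfl | rfl <;> assumption
    · linarith
  rw [← Set.Ioc_union_Ioi_eq_Ioi (zero_le_one' ℝ)]
  refine (lintegral_union_le _ _ _).trans_lt (ENNReal.add_lt_top.2 ⟨?_, ?_⟩)
  · calc _ ≤ ∫⁻ t in Set.Ioc (0 : ℝ) 1, M := by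
          refine setLIntegral_mono measurable_const fun t ht => ?_
          refine (measure_mono (hsub t 1 ht.1 (Or.inr rfl))).trans ((hw 1 one_pos).trans_eq ?_)
          simp
      _ < ⊤ := by simp [hM.lt_top]
  · calc _ ≤ ∫⁻ t in Set.Ioi (1 : ℝ), M * ENNReal.ofReal (t ^ (-3 : ℝ)) := by
          refine setLIntegral_mono (by fun_prop) fun t ht => ?_
          have ht0 : (0 : ℝ) < t := zero_lt_one.trans ht
          exact (measure_mono (hsub t t ht0 (Or.inl rfl))).trans (hw t ht0)
      _ < ⊤ := by
          rw [lintegral_const_mul _ (by fun_prop)]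
          exact ENNReal.mul_lt_top hM.lt_top
            (integrableOn_Ioi_rpow_of_lt (by norm_num) one_pos).lintegral_lt_top

/-- Where a weak-`L³` function is at most one, it is in `L^q` for every `q > 3`. -/
lemma lintegral_small_lt_top {q : ℝ} (hq : 3 < q) (hg : Measurable g) (hg0 : 0 ≤ g) (hM : M ≠ ⊤)
    (hw : ∀ σ : ℝ, 0 < σ → μ {x | σ < g x} ≤ M * ENNReal.ofReal (σ ^ (-3 : ℝ))) :
    ∫⁻ x, ENNReal.ofReal ({x | 1 < g x}ᶜ.indicator g x) ^ q ∂μ < ⊤ := by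
  have hms : MeasurableSet {x | 1 < g x} := measurableSet_lt measurable_const hg
  have hnn : 0 ≤ {x | 1 < g x}ᶜ.indicator g := Set.indicator_nonneg fun x _ => hg0 x
  have e : ∀ x, ENNReal.ofReal ({x | 1 < g x}ᶜ.indicator g x) ^ q =
      ENNReal.ofReal (({x | 1 < g x}ᶜ.indicator g x) ^ q) := fun x =>
    ENNReal.ofReal_rpow_of_nonneg (hnn x) (by linarith)
  simp_rw [e]
  rw [lintegral_rpow_eq_lintegral_meas_lt_mul μ (Filter.Eventually.of_forall hnn)
    (hg.indicator hms.compl).aemeasurable (by linarith)]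
  refine ENNReal.mul_lt_top ENNReal.ofReal_lt_top ?_
  rw [← Set.Ioc_union_Ioi_eq_Ioi (zero_le_one' ℝ)]
  refine (lintegral_union_le _ _ _).trans_lt (ENNReal.add_lt_top.2 ⟨?_, ?_⟩)
  · calc _ ≤ ∫⁻ t in Set.Ioc (0 : ℝ) 1, M * ENNReal.ofReal (t ^ (q - 4)) := by
          refine setLIntegral_mono (by fun_prop) fun t ht => ?_
          have hs : {a | t < {x | 1 < g x}ᶜ.indicator g a} ⊆ {x | t < g x} := fun a ha =>
            lt_of_lt_of_le ha (Set.indicator_le_self' (fun _ _ => hg0 _) a)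
          refine (mul_le_mul_left ((measure_mono hs).trans (hw t ht.1)) _).trans_eq ?_
          rw [mul_assoc, ← ENNReal.ofReal_mul (Real.rpow_nonneg ht.1.le _),
            ← Real.rpow_add ht.1]
          ring_nf
      _ < ⊤ := by
          rw [lintegral_const_mul _ (by fun_prop)]
          refine ENNReal.mul_lt_top hM.lt_top (IntegrableOn.setLIntegral_lt_top ?_)
          exact (intervalIntegrable_iff_integrableOn_Ioc_of_le zero_le_one).1
            (intervalIntegral.intervalIntegrable_rpow' (by linarith))
  · -- The truncated function never exceeds one, so its superlevel sets above one are empty.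
    calc _ ≤ ∫⁻ t in Set.Ioi (1 : ℝ), 0 := by
          refine setLIntegral_mono measurable_const fun t ht => ?_
          have hs : {a | t < {x | 1 < g x}ᶜ.indicator g a} = ∅ := by
            ext a
            have ht' : (1 : ℝ) < t := ht
            simp only [Set.mem_ofPred_eq, Set.indicator_apply, Set.mem_compl_iff,
              Set.mem_empty_iff_false, iff_false, not_lt]
            split_ifs with h <;> linarith
          simp [hs]
      _ < ⊤ := by simp

end WeakL3

/-! ### Gaussian convolution from weak `L³` to `L^q` -/

/-- A Gaussian on `ℝ³`, as an `ℝ≥0∞`-valued function. -/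
noncomputable def gaussK (b : ℝ) (y : EuclideanSpace ℝ (Fin 3)) : ℝ≥0∞ :=
  ENNReal.ofReal (Real.exp (-b * ‖y‖ ^ 2))

lemma measurable_gaussK (b : ℝ) : Measurable (gaussK b) := by
  unfold gaussK; fun_prop

lemma lintegral_gaussK_lt_top {b : ℝ} (hb : 0 < b) : ∫⁻ y, gaussK b y < ⊤ := by
  have h := GaussianFourier.integrable_cexp_neg_mul_sq_norm_add
    (V := EuclideanSpace ℝ (Fin 3)) (b := (b : ℂ)) (by simpa using hb) 0 0
  refine Integrable.lintegral_lt_top (f := fun y : EuclideanSpace ℝ (Fin 3) =>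
    Real.exp (-b * ‖y‖ ^ 2)) ?_
  refine h.norm.congr (Filter.Eventually.of_forall fun y => ?_)
  simp only [zero_mul, add_zero, Complex.norm_exp]
  norm_cast

lemma lintegral_gaussK_rpow_lt_top {b q : ℝ} (hb : 0 < b) (hq : 0 < q) :
    ∫⁻ y, gaussK b y ^ q < ⊤ := by
  have e : ∀ y, gaussK b y ^ q = gaussK (b * q) y := fun y => by
    unfold gaussK
    rw [ENNReal.ofReal_rpow_of_nonneg (Real.exp_pos _).le hq.le, ← Real.exp_mul]
    ring_nf
  simp_rw [e]
  exact lintegral_gaussK_lt_top (mul_pos hb hq)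

/-- A Gaussian mollification of a weak-`L³` function lies in `L^q` for every `q > 3`. -/
lemma lintegral_gaussK_conv_lt_top {b q : ℝ} (hb : 0 < b) (hq : 3 < q) {M : ℝ≥0∞} (hM : M ≠ ⊤)
    {g : EuclideanSpace ℝ (Fin 3) → ℝ} (hg : Measurable g) (hg0 : 0 ≤ g)
    (hw : ∀ σ : ℝ, 0 < σ → volume {x | σ < g x} ≤ M * ENNReal.ofReal (σ ^ (-3 : ℝ))) :
    ∫⁻ x, (∫⁻ z, gaussK b (x - z) * ENNReal.ofReal (g z)) ^ q < ⊤ := by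
  have hq0 : 0 < q := by linarith
  have hq1 : 1 ≤ q := by linarith
  have hK := measurable_gaussK b
  have hms : MeasurableSet {x | 1 < g x} := measurableSet_lt measurable_const hg
  set f₁ : EuclideanSpace ℝ (Fin 3) → ℝ≥0∞ :=
    fun x => ENNReal.ofReal ({x | 1 < g x}.indicator g x) with hf₁
  set f₂ : EuclideanSpace ℝ (Fin 3) → ℝ≥0∞ :=
    fun x => ENNReal.ofReal ({x | 1 < g x}ᶜ.indicator g x) with hf₂
  have m₁ : Measurable f₁ := (hg.indicator hms).ennreal_ofReal
  have m₂ : Measurable f₂ := (hg.indicator hms.compl).ennreal_ofReal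
  have i₁ : ∫⁻ x, f₁ x < ⊤ := lintegral_large_lt_top hg hM hw
  have i₂ : ∫⁻ x, f₂ x ^ q < ⊤ := lintegral_small_lt_top hq hg hg0 hM hw
  have split : ∀ x, ∫⁻ z, gaussK b (x - z) * ENNReal.ofReal (g z) =
      (∫⁻ z, gaussK b (x - z) * f₁ z) + ∫⁻ z, f₂ (x - z) * gaussK b z := by
    intro x
    -- The reflection `z ↦ x - z` turns the second convolution into one with kernel `gaussK b`.
    have r : ∫⁻ z, f₂ (x - z) * gaussK b z = ∫⁻ z, gaussK b (x - z) * f₂ z := by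
      rw [← lintegral_sub_left_eq_self (fun z => gaussK b (x - z) * f₂ z) x]
      refine lintegral_congr fun z => ?_
      rw [sub_sub_cancel, mul_comm]
    rw [r, ← lintegral_add_left (by fun_prop)]
    refine lintegral_congr fun z => ?_
    rw [← mul_add, hf₁, hf₂]
    by_cases h : 1 < g z <;> simp [h]
  have y₁ := young_lintegral volume hq1 hK m₁
  have y₂ := young_lintegral volume hq1 m₂ hK
  have hmeas : Measurable fun x => (∫⁻ z, gaussK b (x - z) * f₁ z) ^ q :=
    (Measurable.lintegral_prod_right' (f := fun p : EuclideanSpace ℝ (Fin 3) ×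
      EuclideanSpace ℝ (Fin 3) => gaussK b (p.1 - p.2) * f₁ p.2) (by fun_prop)).pow_const q
  calc _ ≤ ∫⁻ x, 2 ^ (q - 1) * ((∫⁻ z, gaussK b (x - z) * f₁ z) ^ q +
          (∫⁻ z, f₂ (x - z) * gaussK b z) ^ q) := by
        refine lintegral_mono fun x => ?_
        rw [split]
        exact ENNReal.rpow_add_le_mul_rpow_add_rpow _ _ hq1
    _ = 2 ^ (q - 1) * ((∫⁻ x, (∫⁻ z, gaussK b (x - z) * f₁ z) ^ q) +
          ∫⁻ x, (∫⁻ z, f₂ (x - z) * gaussK b z) ^ q) := by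
        rw [lintegral_const_mul' _ _ (ENNReal.rpow_ne_top_of_nonneg (by linarith) (by simp)),
          lintegral_add_left hmeas]
    _ < ⊤ := by
        refine ENNReal.mul_lt_top (ENNReal.rpow_lt_top_of_nonneg (by linarith) (by simp))
          (ENNReal.add_lt_top.2 ⟨y₁.trans_lt ?_, y₂.trans_lt ?_⟩)
        · exact ENNReal.mul_lt_top (lintegral_gaussK_rpow_lt_top hb hq0)
            (ENNReal.rpow_lt_top_of_nonneg hq0.le i₁.ne)
        · exact ENNReal.mul_lt_top i₂
            (ENNReal.rpow_lt_top_of_nonneg hq0.le (lintegral_gaussK_lt_top hb).ne)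

/-! ### Uniform kernel bound and decay of the tails -/

/-- For `1 ≤ t ≤ l²` the heat kernel at time `t` is at most `exp (-‖y‖² / (4 l²))`. -/
lemma heat_kernel_le {l t r : ℝ} (ht1 : 1 ≤ t) (ht2 : t ≤ l ^ 2) :
    (4 * Real.pi * t) ^ (-(3 : ℝ) / 2) * Real.exp (-r ^ 2 / (4 * t)) ≤
      Real.exp (-(1 / (4 * l ^ 2)) * r ^ 2) := by
  have hpi := Real.pi_gt_three
  have h1 : (4 * Real.pi * t) ^ (-(3 : ℝ) / 2) ≤ 1 :=
    Real.rpow_le_one_of_one_le_of_nonpos (by nlinarith) (by norm_num)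
  have h2 : Real.exp (-r ^ 2 / (4 * t)) ≤ Real.exp (-(1 / (4 * l ^ 2)) * r ^ 2) := by
    refine Real.exp_le_exp.2 ?_
    have : 1 / (4 * l ^ 2) ≤ 1 / (4 * t) :=
      one_div_le_one_div_of_le (by linarith) (by linarith)
    have h3 := mul_le_mul_of_nonneg_right this (sq_nonneg r)
    have h4 : -r ^ 2 / (4 * t) = -(1 / (4 * t) * r ^ 2) := by ring
    rw [h4]
    linarith
  calc _ ≤ 1 * Real.exp (-r ^ 2 / (4 * t)) :=
        mul_le_mul_of_nonneg_right h1 (Real.exp_pos _).le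
    _ ≤ _ := by rw [one_mul]; exact h2

/-- The tails of a finite integral over a normed space tend to zero. -/
lemma exists_tail_le {E : Type*} [NormedAddCommGroup E] [MeasurableSpace E] [BorelSpace E]
    {μ : Measure E} {W : E → ℝ≥0∞} (hW : ∫⁻ x, W x ∂μ < ⊤) {δ : ℝ≥0∞} (hδ : 0 < δ) :
    ∃ n : ℕ, ∫⁻ x in {x : E | (n : ℝ) < ‖x‖}, W x ∂μ < δ := by
  have hms : ∀ n : ℕ, MeasurableSet {x : E | (n : ℝ) < ‖x‖} := fun n =>
    measurableSet_lt measurable_const measurable_norm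
  have hlim := tendsto_measure_iInter_atTop (μ := μ.withDensity W)
    (s := fun n : ℕ => {x : E | (n : ℝ) < ‖x‖}) (fun n => (hms n).nullMeasurableSet)
    (fun m n hmn x (hx : (n : ℝ) < ‖x‖) => lt_of_le_of_lt (Nat.cast_le.2 hmn) hx)
    ⟨0, by
      rw [withDensity_apply _ (hms 0)]
      exact ((setLIntegral_le_lintegral _ _).trans_lt hW).ne⟩
  have hempty : ⋂ n : ℕ, {x : E | (n : ℝ) < ‖x‖} = ∅ := by
    ext x
    obtain ⟨n, hn⟩ := exists_nat_ge ‖x‖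
    simp only [Set.mem_iInter, Set.mem_ofPred_eq, Set.mem_empty_iff_false, iff_false, not_forall,
      not_lt]
    exact ⟨n, hn⟩
  rw [hempty, measure_empty] at hlim
  obtain ⟨n, hn⟩ := (hlim.eventually_lt_const hδ).exists
  refine ⟨n, ?_⟩
  rwa [Function.comp_apply, withDensity_apply _ (hms n)] at hn

/-- For `λ > 1`, `q ∈ (3,∞)`, and a measurable `λ`-DSS vector field
`v₀ : ℝ³ → ℝ³` with finite weak-`L³` quasinorm, the heat extension
`V₀(x,t) = ∫ (4πt)^{-3/2} e^{-|x-z|²/(4t)} v₀(z) dz` satisfies: for every `ε > 0` there is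
`R₀ ≥ 1` with `‖V₀(·,t)‖_{L^q(|x|>R)} ≤ ε` for all `R ≥ R₀` and `t ∈ [1,λ²]`. -/
theorem stmt5 (l : ℝ) (hl : 1 < l) (q : ℝ) (hq : 3 < q)
    (v₀ : EuclideanSpace ℝ (Fin 3) → EuclideanSpace ℝ (Fin 3))
    (hv₀ : Measurable v₀)
    (hDSS : ∀ᵐ (x : EuclideanSpace ℝ (Fin 3)) ∂volume, v₀ x = l • v₀ (l • x))
    (hweak : (⨆ (σ : ℝ) (_ : 0 < σ), ENNReal.ofReal (σ ^ 3) *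
        volume {x : EuclideanSpace ℝ (Fin 3) | σ < ‖v₀ x‖}) < ⊤)
    (V : EuclideanSpace ℝ (Fin 3) → ℝ → EuclideanSpace ℝ (Fin 3))
    (hV : ∀ x t, V x t =
      ∫ z, ((4 * Real.pi * t) ^ (-(3:ℝ)/2) * Real.exp (-‖x - z‖ ^ 2 / (4 * t))) • v₀ z) :
    ∀ ε : ℝ, 0 < ε → ∃ R₀ : ℝ, 1 ≤ R₀ ∧
      ∀ R : ℝ, R₀ ≤ R → ∀ t ∈ Set.Icc (1 : ℝ) (l ^ 2),
        (∫⁻ x in {x : EuclideanSpace ℝ (Fin 3) | R < ‖x‖},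
            (‖V x t‖₊ : ℝ≥0∞) ^ q ∂volume) ^ (1 / q) ≤ ENNReal.ofReal ε := by
  intro ε hε
  have hq0 : 0 < q := by linarith
  have hl0 : 0 < l := by linarith
  have hb : 0 < 1 / (4 * l ^ 2) := by positivity
  set U : EuclideanSpace ℝ (Fin 3) → ℝ≥0∞ := fun x =>
    ∫⁻ z, gaussK (1 / (4 * l ^ 2)) (x - z) * ENNReal.ofReal ‖v₀ z‖ with hU
  have hw : ∀ σ : ℝ, 0 < σ → volume {x | σ < ‖v₀ x‖} ≤
      (⨆ (σ : ℝ) (_ : 0 < σ), ENNReal.ofReal (σ ^ 3) *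
        volume {x : EuclideanSpace ℝ (Fin 3) | σ < ‖v₀ x‖}) *
        ENNReal.ofReal (σ ^ (-3 : ℝ)) := by
    intro σ hσ
    have h3 : σ ^ 3 * σ ^ (-3 : ℝ) = 1 := by
      rw [← Real.rpow_natCast, ← Real.rpow_add hσ]; norm_num
    calc volume {x | σ < ‖v₀ x‖}
        = (ENNReal.ofReal (σ ^ 3) * volume {x | σ < ‖v₀ x‖}) *
            ENNReal.ofReal (σ ^ (-3 : ℝ)) := by
          rw [mul_right_comm, ← ENNReal.ofReal_mul (by positivity), h3]
          simp
      _ ≤ _ := by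
          refine mul_le_mul_left ?_ _
          exact le_iSup₂ (f := fun (σ : ℝ) (_ : 0 < σ) => ENNReal.ofReal (σ ^ 3) *
            volume {x : EuclideanSpace ℝ (Fin 3) | σ < ‖v₀ x‖}) σ hσ
  have hUq : ∫⁻ x, U x ^ q < ⊤ :=
    lintegral_gaussK_conv_lt_top hb hq hweak.ne hv₀.norm (fun x => norm_nonneg _) hw
  have hVU : ∀ t ∈ Set.Icc (1 : ℝ) (l ^ 2), ∀ x, (‖V x t‖₊ : ℝ≥0∞) ≤ U x := by
    intro t ht x
    rw [hV]
    refine (enorm_integral_le_lintegral_enorm _).trans (lintegral_mono fun z => ?_)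
    have ht0 : 0 < t := zero_lt_one.trans_le ht.1
    have hpi := Real.pi_pos
    rw [enorm_smul, ofReal_norm, Real.enorm_of_nonneg (by positivity)]
    exact mul_le_mul_left (ENNReal.ofReal_le_ofReal (heat_kernel_le ht.1 ht.2)) _
  obtain ⟨n, hn⟩ := exists_tail_le hUq
    (ENNReal.rpow_pos (ENNReal.ofReal_pos.2 hε) ENNReal.ofReal_ne_top :
      0 < ENNReal.ofReal ε ^ q)
  refine ⟨max 1 n, le_max_left _ _, fun R hR t ht => ?_⟩
  rw [one_div, ENNReal.rpow_inv_le_iff hq0]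
  refine le_trans ?_ hn.le
  calc _ ≤ ∫⁻ x in {x : EuclideanSpace ℝ (Fin 3) | R < ‖x‖}, U x ^ q :=
        lintegral_mono fun x => ENNReal.rpow_le_rpow (hVU t ht x) hq0.le
    _ ≤ _ := lintegral_mono_set fun x (hx : R < ‖x‖) =>
        lt_of_le_of_lt ((le_max_right _ _).trans hR) hx
end

section
/- There is a universal constant C > 0 with the following property. Let R₀ > 0 and let H : ℝ³ → [0,∞) be measurable with ∫_{ℝ³} H⁴ dx < ∞. Then for every y ∈ ℝ³: (i) if |y| ≤ 4R₀, then ∫_{R₀ ≤ |z| ≤ 2R₀} H(z) / (R₀ |y−z|²) dz ≤ C · R₀^{−3/4} · (∫ H⁴)^{1/4}; (ii) if |y| > 4R₀, then ∫_{R₀ ≤ |z| ≤ 2R₀} H(z) / (R₀ |y−z|²) dz ≤ C · |y|^{−2} · R₀^{5/4} · (∫ H⁴)^{1/4}. -/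
/-!
Both bounds are Hölder's inequality with exponents `4` and `4/3`, applied to `H` and the kernel
`z ↦ 1 / (R₀ |y - z|²)` on the annulus (`setLIntegral_mul_le_of_kernel_bound`). What remains is to
bound the integral of the `4/3`-power of the kernel, which is `R₀^(-4/3) |y - z|^(-8/3)`.

If `|y| ≤ 4 R₀`, the annulus lies in the ball of radius `7 R₀` about `y`. Since `8/3 < 3`, the
function `|x|^(-8/3)` is integrable there, and by scaling its integral is a constant times
`R₀^(1/3)` (`setIntegral_ball_rpow`). If `|y| > 4 R₀`, then `|y - z| ≥ |y| / 2` on the annulus, so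
the kernel is at most `4 / (R₀ |y|²)`, and the annulus has volume at most a constant times `R₀³`.
-/

open MeasureTheory
open scoped ENNReal NNReal

/-- Hölder's inequality with exponents `4` and `4/3`, the kernel entering only through a bound `I`
on the integral of its `4/3`-power. -/
lemma setLIntegral_mul_le_of_kernel_bound {E : Type*} [MeasurableSpace E] {μ : Measure E}
    {A : Set E} {H k : E → ℝ} (hH : Measurable H) (hH0 : ∀ z, 0 ≤ H z)
    (hk : Measurable k) (hk0 : ∀ z, 0 ≤ k z) {I : ℝ} (hI0 : 0 ≤ I)
    (hI : ∫⁻ z in A, ENNReal.ofReal (k z ^ ((4 : ℝ) / 3)) ∂μ ≤ ENNReal.ofReal I) :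
    ∫⁻ z in A, ENNReal.ofReal (H z * k z) ∂μ ≤
      ENNReal.ofReal (I ^ ((3 : ℝ) / 4)) *
        (∫⁻ z, ENNReal.ofReal (H z ^ 4) ∂μ) ^ ((1 : ℝ) / 4) := by
  have hpq : (4 : ℝ).HolderConjugate (4 / 3) := by
    rw [Real.holderConjugate_iff]; norm_num
  have h := ENNReal.lintegral_mul_le_Lp_mul_Lq (μ.restrict A) hpq
    (f := fun z => ENNReal.ofReal (H z)) (g := fun z => ENNReal.ofReal (k z))
    hH.ennreal_ofReal.aemeasurable hk.ennreal_ofReal.aemeasurable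
  have e1 : ∀ z, ENNReal.ofReal (H z) ^ (4 : ℝ) = ENNReal.ofReal (H z ^ 4) := fun z => by
    rw [ENNReal.ofReal_rpow_of_nonneg (hH0 z) (by norm_num)]; norm_cast
  have e2 : ∀ z, ENNReal.ofReal (k z) ^ ((4 : ℝ) / 3) = ENNReal.ofReal (k z ^ ((4 : ℝ) / 3)) :=
    fun z => ENNReal.ofReal_rpow_of_nonneg (hk0 z) (by norm_num)
  simp only [Pi.mul_apply, ← ENNReal.ofReal_mul (hH0 _), e1, e2] at h
  refine h.trans ?_
  rw [mul_comm]
  gcongr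
  · rw [← ENNReal.ofReal_rpow_of_nonneg hI0 (by norm_num),
      show (1 : ℝ) / (4 / 3) = 3 / 4 by norm_num]
    gcongr
  · exact Measure.restrict_le_self

lemma integrableOn_ball_rpow (r : ℝ) :
    IntegrableOn (fun x : EuclideanSpace ℝ (Fin 3) => ‖x‖ ^ (-(8 : ℝ) / 3))
      (Metric.ball 0 r) volume := by
  refine integrableOn_ball_of_norm_le_rpow (C := 1) (α := 8 / 3) (by simp)
    (by simp; norm_num) (ae_of_all _ fun x => ?_) (Measurable.aestronglyMeasurable (by fun_prop))
  rw [Real.norm_of_nonneg (by positivity), one_mul, neg_div]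

/-- The dilation `x ↦ R x` contributes `R³` from the volume and `R^(-8/3)` from the integrand. -/
lemma setIntegral_ball_rpow {R : ℝ} (hR : 0 < R) (r : ℝ) :
    ∫ x : EuclideanSpace ℝ (Fin 3) in Metric.ball 0 (R * r), ‖x‖ ^ (-(8 : ℝ) / 3) =
      R ^ ((1 : ℝ) / 3) *
        ∫ x : EuclideanSpace ℝ (Fin 3) in Metric.ball 0 r, ‖x‖ ^ (-(8 : ℝ) / 3) := by
  have h := Measure.setIntegral_comp_smul_of_pos (volume : Measure (EuclideanSpace ℝ (Fin 3)))
    (fun x => ‖x‖ ^ (-(8 : ℝ) / 3)) (Metric.ball 0 r) hR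
  rw [smul_ball hR.ne', smul_zero, Real.norm_of_nonneg hR.le] at h
  simp only [norm_smul, Real.norm_of_nonneg hR.le, Real.mul_rpow hR.le (norm_nonneg _),
    integral_const_mul, finrank_euclideanSpace, Fintype.card_fin, smul_eq_mul] at h
  have e : R ^ ((1 : ℝ) / 3) = R ^ 3 * R ^ (-(8 : ℝ) / 3) := by
    rw [← Real.rpow_natCast, ← Real.rpow_add hR]; norm_num
  rw [e, mul_assoc, h, mul_inv_cancel_left₀ (by positivity)]

/-- The `4/3`-power of the kernel over any set within distance `7 R` of `y`. -/
lemma setLIntegral_kernel_near {R : ℝ} (hR : 0 < R) (y : EuclideanSpace ℝ (Fin 3))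
    {A : Set (EuclideanSpace ℝ (Fin 3))} (hA : ∀ z ∈ A, ‖y - z‖ < R * 7) :
    ∫⁻ z in A, ENNReal.ofReal ((1 / (R * ‖y - z‖ ^ 2)) ^ ((4 : ℝ) / 3)) ≤
      ENNReal.ofReal (R⁻¹ *
        ∫ x : EuclideanSpace ℝ (Fin 3) in Metric.ball 0 7, ‖x‖ ^ (-(8 : ℝ) / 3)) := by
  have e : ∀ t : ℝ, 0 ≤ t →
      (1 / (R * t ^ 2)) ^ ((4 : ℝ) / 3) = R ^ (-(4 : ℝ) / 3) * t ^ (-(8 : ℝ) / 3) := by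
    intro t ht
    rw [one_div, Real.inv_rpow (by positivity), Real.mul_rpow hR.le (by positivity), mul_inv,
      ← Real.rpow_natCast t 2, ← Real.rpow_mul ht, ← Real.rpow_neg hR.le, ← Real.rpow_neg ht]
    norm_num
  set F : EuclideanSpace ℝ (Fin 3) → ℝ≥0∞ :=
    (Metric.ball 0 (R * 7)).indicator
      (fun x => ENNReal.ofReal (R ^ (-(4 : ℝ) / 3) * ‖x‖ ^ (-(8 : ℝ) / 3))) with hF
  have hFm : Measurable F := Measurable.indicator (by fun_prop) Metric.isOpen_ball.measurableSet
  calc ∫⁻ z in A, ENNReal.ofReal ((1 / (R * ‖y - z‖ ^ 2)) ^ ((4 : ℝ) / 3))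
      ≤ ∫⁻ z in A, F (y - z) := by
        refine setLIntegral_mono (by fun_prop) fun z hz => ?_
        rw [hF, Set.indicator_of_mem (by simpa using hA z hz), e _ (norm_nonneg _)]
    _ ≤ ∫⁻ z, F (y - z) := setLIntegral_le_lintegral _ _
    _ = ∫⁻ z, F z := lintegral_sub_left_eq_self F y
    _ = ENNReal.ofReal (∫ x : EuclideanSpace ℝ (Fin 3) in Metric.ball 0 (R * 7),
          R ^ (-(4 : ℝ) / 3) * ‖x‖ ^ (-(8 : ℝ) / 3)) := by
        rw [hF, lintegral_indicator Metric.isOpen_ball.measurableSet,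
          ofReal_integral_eq_lintegral_ofReal ((integrableOn_ball_rpow _).const_mul _)
            (ae_of_all _ fun x => by positivity)]
    _ = _ := by
        rw [integral_const_mul, setIntegral_ball_rpow hR, ← mul_assoc, ← Real.rpow_add hR,
          ← Real.rpow_neg_one]
        norm_num

/-- The `4/3`-power of the kernel over a subset of the ball of radius `2 R`, seen from a point `y`
with `|y| > 4 R`. -/
lemma setLIntegral_kernel_far {R : ℝ} (hR : 0 < R) {y : EuclideanSpace ℝ (Fin 3)}
    (hy : 4 * R < ‖y‖) {A : Set (EuclideanSpace ℝ (Fin 3))} (hA : ∀ z ∈ A, ‖z‖ ≤ 2 * R) :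
    ∫⁻ z in A, ENNReal.ofReal ((1 / (R * ‖y - z‖ ^ 2)) ^ ((4 : ℝ) / 3)) ≤
      ENNReal.ofReal ((4 / (R * ‖y‖ ^ 2)) ^ ((4 : ℝ) / 3) * (R ^ 3 *
        volume.real (Metric.ball (0 : EuclideanSpace ℝ (Fin 3)) 1) * 8)) := by
  have hy0 : 0 < ‖y‖ := by linarith
  calc ∫⁻ z in A, ENNReal.ofReal ((1 / (R * ‖y - z‖ ^ 2)) ^ ((4 : ℝ) / 3))
      ≤ ∫⁻ z in A, ENNReal.ofReal ((4 / (R * ‖y‖ ^ 2)) ^ ((4 : ℝ) / 3)) := by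
        refine setLIntegral_mono (by fun_prop) fun z hz => ?_
        have h1 : ‖y‖ / 2 ≤ ‖y - z‖ := by
          have := norm_sub_norm_le y z
          linarith [hA z hz]
        have h2 : 1 / (R * ‖y - z‖ ^ 2) ≤ 4 / (R * ‖y‖ ^ 2) := by
          calc 1 / (R * ‖y - z‖ ^ 2) ≤ 1 / (R * (‖y‖ / 2) ^ 2) := by gcongr
            _ = 4 / (R * ‖y‖ ^ 2) := by field_simp; norm_num
        gcongr
    _ = ENNReal.ofReal ((4 / (R * ‖y‖ ^ 2)) ^ ((4 : ℝ) / 3)) * volume A := setLIntegral_const _ _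
    _ ≤ ENNReal.ofReal ((4 / (R * ‖y‖ ^ 2)) ^ ((4 : ℝ) / 3)) *
          volume (Metric.closedBall (0 : EuclideanSpace ℝ (Fin 3)) (2 * R)) := by
        gcongr
        intro z hz
        simpa using hA z hz
    _ = _ := by
        rw [ENNReal.ofReal_mul (by positivity), ← ofReal_measureReal
          (isCompact_closedBall (0 : EuclideanSpace ℝ (Fin 3)) (2 * R)).measure_ne_top,
          Measure.addHaar_real_closedBall _ _ (by positivity)]
        simp only [finrank_euclideanSpace, Fintype.card_fin]
        congr 2
        ring

/-- There is a universal constant `C > 0` such that for all `R₀ > 0` and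
measurable `H : ℝ³ → [0,∞)` with `∫ H⁴ < ∞`, for every `y ∈ ℝ³`:
(i) if `|y| ≤ 4R₀` then `∫_{R₀ ≤ |z| ≤ 2R₀} H(z)/(R₀ |y−z|²) dz ≤ C R₀^{−3/4} (∫H⁴)^{1/4}`;
(ii) if `|y| > 4R₀` then the same integral is `≤ C |y|^{−2} R₀^{5/4} (∫H⁴)^{1/4}`. -/
theorem stmt15 :
    ∃ C : ℝ, 0 < C ∧
      ∀ R₀ : ℝ, 0 < R₀ →
        ∀ H : EuclideanSpace ℝ (Fin 3) → ℝ, Measurable H → (∀ z, 0 ≤ H z) →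
          (∫⁻ z, ENNReal.ofReal (H z ^ 4) ∂volume) < ⊤ →
          ∀ y : EuclideanSpace ℝ (Fin 3),
            (‖y‖ ≤ 4 * R₀ →
              (∫⁻ z in {z : EuclideanSpace ℝ (Fin 3) | R₀ ≤ ‖z‖ ∧ ‖z‖ ≤ 2 * R₀},
                  ENNReal.ofReal (H z / (R₀ * ‖y - z‖ ^ 2)) ∂volume) ≤
                ENNReal.ofReal (C * R₀ ^ (-(3:ℝ)/4)) *
                  (∫⁻ z, ENNReal.ofReal (H z ^ 4) ∂volume) ^ ((1:ℝ)/4)) ∧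
            (4 * R₀ < ‖y‖ →
              (∫⁻ z in {z : EuclideanSpace ℝ (Fin 3) | R₀ ≤ ‖z‖ ∧ ‖z‖ ≤ 2 * R₀},
                  ENNReal.ofReal (H z / (R₀ * ‖y - z‖ ^ 2)) ∂volume) ≤
                ENNReal.ofReal (C * R₀ ^ ((5:ℝ)/4) / ‖y‖ ^ 2) *
                  (∫⁻ z, ENNReal.ofReal (H z ^ 4) ∂volume) ^ ((1:ℝ)/4)) := by
  set K : ℝ := ∫ x : EuclideanSpace ℝ (Fin 3) in Metric.ball 0 7, ‖x‖ ^ (-(8 : ℝ) / 3)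
  set V : ℝ := volume.real (Metric.ball (0 : EuclideanSpace ℝ (Fin 3)) 1)
  have hK : 0 ≤ K := integral_nonneg fun x => by positivity
  have hV : 0 ≤ V := measureReal_nonneg
  refine ⟨1 + K ^ ((3 : ℝ) / 4) + 4 * (V * 8) ^ ((3 : ℝ) / 4), by positivity, ?_⟩
  intro R hR H hH hH0 _ y
  have hk : Measurable fun z : EuclideanSpace ℝ (Fin 3) => 1 / (R * ‖y - z‖ ^ 2) := by fun_prop
  have hk0 : ∀ z : EuclideanSpace ℝ (Fin 3), 0 ≤ 1 / (R * ‖y - z‖ ^ 2) := fun z => by positivity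
  simp only [div_eq_mul_one_div (H _)]
  constructor
  · intro hy
    have hI := setLIntegral_kernel_near hR y
      (A := {z : EuclideanSpace ℝ (Fin 3) | R ≤ ‖z‖ ∧ ‖z‖ ≤ 2 * R}) fun z hz => by
        have := norm_sub_le y z
        linarith [hz.2]
    have hI0 : 0 ≤ R⁻¹ * K := by positivity
    refine (setLIntegral_mul_le_of_kernel_bound hH hH0 hk hk0 hI0 hI).trans ?_
    gcongr
    rw [Real.mul_rpow (by positivity) hK, Real.inv_rpow hR.le, ← Real.rpow_neg hR.le, mul_comm,
      neg_div]
    gcongr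
    linarith [Real.rpow_nonneg (mul_nonneg hV (by norm_num : (0 : ℝ) ≤ 8)) ((3 : ℝ) / 4)]
  · intro hy
    have hy0 : 0 < ‖y‖ := by linarith
    refine (setLIntegral_mul_le_of_kernel_bound hH hH0 hk hk0 (by positivity)
      (setLIntegral_kernel_far hR hy fun z hz => hz.2)).trans ?_
    gcongr
    have e : R ^ ((5 : ℝ) / 4) = R⁻¹ * (R ^ 3) ^ ((3 : ℝ) / 4) := by
      rw [← Real.rpow_natCast, ← Real.rpow_mul hR.le, ← Real.rpow_neg_one, ← Real.rpow_add hR]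
      norm_num
    rw [Real.mul_rpow (by positivity) (by positivity), ← Real.rpow_mul (by positivity),
      mul_assoc (R ^ 3), Real.mul_rpow (by positivity) (by positivity), e,
      show (4 : ℝ) / 3 * (3 / 4) = 1 by norm_num, Real.rpow_one]
    calc 4 / (R * ‖y‖ ^ 2) * ((R ^ 3) ^ ((3 : ℝ) / 4) * (V * 8) ^ ((3 : ℝ) / 4))
        = (4 * (V * 8) ^ ((3 : ℝ) / 4)) * (R⁻¹ * (R ^ 3) ^ ((3 : ℝ) / 4)) / ‖y‖ ^ 2 := by
          field_simp
      _ ≤ _ := by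
          gcongr
          linarith [Real.rpow_nonneg hK ((3 : ℝ) / 4)]
end
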